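/- arXiv:2105.10766 — 2 statements merged into one kernel-verified Lean document; each statement's English description precedes it below -/
import Mathlib

section
/- Let g be a compactly driven system. Then g has the USP if and only if g has the uniform attraction property (UAP), i.e., if and only if there exists a map A assigning to each input ū ∈ U^ℤ a sequence of points (A_k(ū))_{k∈ℤ} in X with g(u_k, A_k(ū)) = A_{k+1}(ū) for all k ∈ ℤ, such that for every ε > 0 there exists J ∈ ℕ with d(φ_ū(k,k−j,x), A_k(ū)) ≤ ε for all j ≥ J, all k ∈ ℤ, all ū ∈ U^ℤ, and all x ∈ X. -/
open Metric Set Filter Topology Function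

universe u' v'

variable {U : Type u'} {X : Type v'}

/-- `proc g u j m x = φ_ū(m+j, m, x)`: apply `g_{u m}, g_{u (m+1)}, …, g_{u (m+j-1)}`
to `x`, in that order. -/
def proc (g : U → X → X) (u : ℤ → U) : ℕ → ℤ → X → X
  | 0, _, x => x
  | j + 1, m, x => g (u (m + j)) (proc g u j m x)

/-- A solution of the driven system `g` for the input `u`. -/
def IsSolution (g : U → X → X) (u : ℤ → U) (x : ℤ → X) : Prop :=
  ∀ n : ℤ, x (n + 1) = g (u n) (x n)

/-- The unique solution property: every input has exactly one solution. -/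
def USP (g : U → X → X) : Prop :=
  ∀ u : ℤ → U, ∃! x : ℤ → X, IsSolution g u x

/-- The set of reachable states at time `n`: `X_n(ū) = ⋂_{j ≥ 1} φ_ū(n, n - j, X)`. -/
def reach (g : U → X → X) (u : ℤ → U) (n : ℤ) : Set X :=
  ⋂ j : ℕ, Set.range (proc g u (j + 1) (n - (j + 1)))

/-- The reachable set `X_U = ⋃ {X_n(ū) : n ∈ ℤ, ū ∈ U^ℤ}`. -/
def reachSet (g : U → X → X) : Set X :=
  ⋃ u : ℤ → U, ⋃ n : ℤ, reach g u n

/-- The left-infinite part `←u^n = (…, u_{n-2}, u_{n-1})` of an input `u`;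
coordinate `k : ℕ` corresponds to time `n - 1 - k` (so `0` is the most recent one). -/
def leftOf (u : ℤ → U) (n : ℤ) : ℕ → U := fun k => u (n - 1 - (k : ℤ))

/-- The right-shift map `r : (…, u_{-2}, u_{-1}) ↦ (…, u_{-3}, u_{-2})`. -/
def shift (w : ℕ → U) : ℕ → U := fun k => w (k + 1)

/-- The concatenation map `σ_v : (…, u_{-2}, u_{-1}) ↦ (…, u_{-2}, u_{-1}, v)`. -/
def append (v : U) (w : ℕ → U) : ℕ → U := fun k => Nat.casesOn k v w

/-- `encProc g w j = φ_ū(0, -j, ·)` for any input `ū` whose left-infinite part is `w`. -/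
def encProc (g : U → X → X) : (ℕ → U) → ℕ → X → X
  | _, 0, x => x
  | w, j + 1, x => g (w 0) (encProc g (shift w) j x)

/-- The encoding map `E(←u) = X_0(ū) = ⋂_{j ≥ 1} φ_ū(0, -j, X)`. -/
def enc (g : U → X → X) (w : ℕ → U) : Set X :=
  ⋂ j : ℕ, Set.range (encProc g w (j + 1))

/-- The map `g̃_v : (…, x_{-2}, x_{-1}) ↦ (…, x_{-2}, x_{-1}, g(v, x_{-1}))`. -/
def tildeg (g : U → X → X) (v : U) (x : ℕ → X) : ℕ → X :=
  fun k => Nat.casesOn k (g v (x 0)) x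

/-- The Hausdorff semi-distance `dist(A, B) = sup_{a ∈ A} inf_{b ∈ B} d(a, b)`. -/
noncomputable def semiDist [MetricSpace X] (A B : Set X) : ℝ :=
  sSup ((fun a => Metric.infDist a B) '' A)

/-! Suppose the unique solution property holds but attraction is not uniform. After shifting time,
there are inputs with trajectories started ever further in the past whose states at time `0` stay
outside a fixed entourage around those of the solutions. Being a trajectory is a closed condition
on (input, sequence) pairs, which range over a compact product space, so in the limit some input has
two different bi-infinite solutions. Conversely, every solution is the trajectory of its own
arbitrarily distant past, so uniform attraction forces it to be `A u`. -/

/-- `y` follows the driven system `g` under the input `u` at the times in `s`: a solution when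
`s = univ`, a forward trajectory started at time `m` when `s = Ici m`. -/
def IsSolutionOn (g : U → X → X) (s : Set ℤ) (u : ℤ → U) (y : ℤ → X) : Prop :=
  ∀ n ∈ s, y (n + 1) = g (u n) (y n)

/-- Uniform pullback attraction: the states at time `k` of the trajectories started at time `k - j`
converge to `A u k` as `j → ∞`, uniformly in the input `u`, the time `k` and the initial state. -/
def UniformlyAttracts [UniformSpace X] (g : U → X → X) (A : (ℤ → U) → ℤ → X) : Prop :=
  ∀ W ∈ uniformity X, ∃ J : ℕ, ∀ j : ℕ, J ≤ j →
    ∀ (k : ℤ) (u : ℤ → U) (x : X), (proc g u j (k - j) x, A u k) ∈ W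

theorem uniformlyAttracts_iff_dist [PseudoMetricSpace X] {g : U → X → X}
    {A : (ℤ → U) → ℤ → X} :
    UniformlyAttracts g A ↔ ∀ ε > (0 : ℝ), ∃ J : ℕ, ∀ j : ℕ, J ≤ j →
      ∀ (k : ℤ) (u : ℤ → U) (x : X), dist (proc g u j (k - j) x) (A u k) ≤ ε :=
  uniformity_basis_dist_le.forall_iff fun _ _ hVW ⟨J, hJ⟩ =>
    ⟨J, fun j hj k u x => hVW (hJ j hj k u x)⟩

section Trajectories

variable {g : U → X → X} {s : Set ℤ} {u : ℤ → U} {y : ℤ → X}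

theorem isSolutionOn_univ : IsSolutionOn g univ u y ↔ IsSolution g u y := by
  simp only [IsSolutionOn, IsSolution, mem_univ, forall_const]

theorem IsSolutionOn.mono {t : Set ℤ} (hst : s ⊆ t) (h : IsSolutionOn g t u y) :
    IsSolutionOn g s u y := fun n hn => h n (hst hn)

theorem IsSolutionOn.comp_add_right (h : IsSolutionOn g s u y) (k : ℤ) :
    IsSolutionOn g ((· + k) ⁻¹' s) (fun n => u (n + k)) (fun n => y (n + k)) := fun n hn => by
  simpa only [add_right_comm] using h (n + k) hn

theorem isSolutionOn_Ici_proc (g : U → X → X) (u : ℤ → U) (m : ℤ) (x : X) :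
    IsSolutionOn g (Ici m) u fun n => proc g u (n - m).toNat m x := by
  intro n hn
  obtain ⟨j, rfl⟩ := Int.le.dest hn
  have toNat_succ : (m + j + 1 - m).toNat = j + 1 := by omega
  simp only [toNat_succ, add_sub_cancel_left, Int.toNat_natCast, proc]

theorem IsSolution.proc_apply (h : IsSolution g u y) (m : ℤ) (j : ℕ) :
    proc g u j m (y m) = y (m + j) := by
  induction j with
  | zero => simp only [proc, Nat.cast_zero, add_zero]
  | succ j ih => rw [proc, ih, ← h, Nat.cast_succ, add_assoc]

theorem isClosed_setOf_isSolutionOn [TopologicalSpace U] [TopologicalSpace X] [T2Space X]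
    (hg : Continuous fun p : U × X => g p.1 p.2) (s : Set ℤ) :
    IsClosed {p : (ℤ → U) × (ℤ → X) | IsSolutionOn g s p.1 p.2} := by
  simp only [IsSolutionOn, ofPred_forall]
  exact isClosed_biInter fun n _ => isClosed_eq (by fun_prop)
    (hg.comp (f := fun p : (ℤ → U) × (ℤ → X) => (p.1 n, p.2 n)) (by fun_prop))

end Trajectories

theorem IsSolution.eq_of_uniformlyAttracts [UniformSpace X] [T0Space X] {g : U → X → X}
    {A : (ℤ → U) → ℤ → X} (hA : UniformlyAttracts g A) {u : ℤ → U} {y : ℤ → X}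
    (hy : IsSolution g u y) : y = A u := by
  refine funext fun k => eq_of_uniformity fun {W} hW => ?_
  obtain ⟨J, hJ⟩ := hA W hW
  simpa only [hy.proc_apply, sub_add_cancel] using hJ J le_rfl k u (y (k - J))

namespace USP

variable [TopologicalSpace U] [CompactSpace U] [UniformSpace X] [T2Space X] [CompactSpace X]
  {g : U → X → X}

theorem exists_forall_mem_of_isSolutionOn_Ici_zero (h : USP g)
    (hg : Continuous fun p : U × X => g p.1 p.2) {W : Set (X × X)} (hW : W ∈ uniformity X) :
    ∃ J : ℕ, ∀ (u : ℤ → U) (y a : ℤ → X), IsSolutionOn g (Ici (-(J : ℤ))) u y →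
      IsSolution g u a → (y 0, a 0) ∈ W := by
  let C (J : ℕ) : Set ((ℤ → U) × (ℤ → X) × (ℤ → X)) :=
    {p | IsSolutionOn g (Ici (-(J : ℤ))) p.1 p.2.1 ∧ IsSolutionOn g univ p.1 p.2.2}
  have antitone_C : Antitone C := fun I J hIJ p hp =>
    ⟨hp.1.mono (Ici_subset_Ici.2 (by omega)), hp.2⟩
  have isClosed_C (J : ℕ) : IsClosed (C J) :=
    ((isClosed_setOf_isSolutionOn hg _).preimage
      (f := fun p : (ℤ → U) × (ℤ → X) × (ℤ → X) => (p.1, p.2.1)) (by fun_prop)).inter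
    ((isClosed_setOf_isSolutionOn hg _).preimage
      (f := fun p : (ℤ → U) × (ℤ → X) × (ℤ → X) => (p.1, p.2.2)) (by fun_prop))
  have eq_of_mem_iInter : ∀ p ∈ ⋂ J, C J, p.2.1 = p.2.2 := fun p hp => by
    rw [mem_iInter] at hp
    exact (h p.1).unique (fun n => (hp n.natAbs).1 n (mem_Ici.2 (by omega)))
      (isSolutionOn_univ.1 (hp 0).2)
  obtain ⟨J, hJ⟩ : ∃ J, C J ⊆ {p | (p.2.1 0, p.2.2 0) ∈ W} := by
    refine exists_subset_nhds_of_compactSpace antitone_C.directed_ge isClosed_C fun p hp => ?_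
    have continuous_eval : Continuous
        fun p : (ℤ → U) × (ℤ → X) × (ℤ → X) => (p.2.1 0, p.2.2 0) := by fun_prop
    have mem_nhds : W ∈ 𝓝 (p.2.1 0, p.2.2 0) := by
      rw [eq_of_mem_iInter p hp]
      exact nhds_le_uniformity _ hW
    exact continuous_eval.continuousAt mem_nhds
  exact ⟨J, fun u y a hy ha => @hJ (u, y, a) ⟨hy, isSolutionOn_univ.2 ha⟩⟩

theorem exists_forall_mem_of_isSolutionOn_Ici (h : USP g)
    (hg : Continuous fun p : U × X => g p.1 p.2) {W : Set (X × X)} (hW : W ∈ uniformity X) :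
    ∃ J : ℕ, ∀ (k : ℤ) (u : ℤ → U) (y a : ℤ → X), IsSolutionOn g (Ici (k - J)) u y →
      IsSolution g u a → (y k, a k) ∈ W := by
  obtain ⟨J, hJ⟩ := h.exists_forall_mem_of_isSolutionOn_Ici_zero hg hW
  refine ⟨J, fun k u y a hy ha => ?_⟩
  have hy' := hy.comp_add_right k
  have ha' := (isSolutionOn_univ.2 ha).comp_add_right k
  rw [preimage_add_const_Ici, sub_sub_cancel_left] at hy'
  rw [preimage_univ, isSolutionOn_univ] at ha'
  simpa only [zero_add] using hJ _ _ _ hy' ha'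

theorem uniformlyAttracts (h : USP g) (hg : Continuous fun p : U × X => g p.1 p.2)
    {A : (ℤ → U) → ℤ → X} (hA : ∀ u, IsSolution g u (A u)) : UniformlyAttracts g A := by
  intro W hW
  obtain ⟨J, hJ⟩ := h.exists_forall_mem_of_isSolutionOn_Ici hg hW
  refine ⟨J, fun j hj k u x => ?_⟩
  have trajectory := (isSolutionOn_Ici_proc g u (k - j) x).mono
    (Ici_subset_Ici.2 (by omega : k - (j : ℤ) ≤ k - J))
  simpa only [sub_sub_cancel, Int.toNat_natCast] using hJ k u _ _ trajectory (hA u)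

end USP

theorem stmt_6_general [TopologicalSpace U] [CompactSpace U] [UniformSpace X] [T2Space X]
    [CompactSpace X] (g : U → X → X) (hg : Continuous fun p : U × X => g p.1 p.2) :
    USP g ↔
      ∃ A : (ℤ → U) → ℤ → X, (∀ u, IsSolution g u (A u)) ∧ UniformlyAttracts g A := by
  constructor
  · intro h
    choose A hA using fun u => (h u).exists
    exact ⟨A, hA, h.uniformlyAttracts hg hA⟩
  · rintro ⟨A, hA, hattr⟩ u
    exact ⟨A u, hA u, fun _ hy => hy.eq_of_uniformlyAttracts hattr⟩

/-- for a compactly driven system, the USP is equivalent to the uniform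
attraction property (UAP). -/
theorem stmt_6 [MetricSpace X] [CompactSpace X] [MetricSpace U] [CompactSpace U]
    (g : U → X → X) (hg : Continuous fun p : U × X => g p.1 p.2) :
    USP g ↔
      ∃ A : (ℤ → U) → ℤ → X,
        (∀ (u : ℤ → U) (k : ℤ), g (u k) (A u k) = A u (k + 1)) ∧
          ∀ ε > (0 : ℝ), ∃ J : ℕ, ∀ j : ℕ, J ≤ j →
            ∀ (k : ℤ) (u : ℤ → U) (x : X), dist (proc g u j (k - j) x) (A u k) ≤ ε :=
  (stmt_6_general g hg).trans <| exists_congr fun _ =>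
    and_congr (forall₂_congr fun _ _ => eq_comm) uniformlyAttracts_iff_dist
end

section
/- Let g be a compactly driven system with the USP. Define E_n(←u) = φ_ū(0,−n,X) for any ū ∈ U^ℤ whose left-infinite part is ←u. Then E_n converges to E uniformly on ←U: for every ε > 0 there exists N ∈ ℕ such that d_H(E_n(←u), E(←u)) < ε for all ←u ∈ ←U and all n ≥ N. -/
open Metric Set Filter Topology Function

universe u' v'

variable {U : Type u'} {X : Type v'}

/-!
Two compactness arguments. For a fixed past `w`, the sets `E_n(w)` decrease to `E(w)`, and every
point of `E(w)` is the value at time `0` of a solution: the decreasing compact sets `E_n` of the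
shifted past meet the fibre of `g_{w 0}` over each point of `E(w)`, so one can step backwards
indefinitely. Hence unique solutions make `E(w)` a point, and `E_n(w)` eventually has small
diameter. For fixed `n`, smallness of `E_n(w)` is an open condition on `w`; it is monotone in `n`,
so compactness of `←U` makes it uniform, as in Dini's theorem.
-/

section Orbits

variable {g : U → X → X}

theorem encProc_succ_apply (w : ℕ → U) (n : ℕ) (x : X) :
    encProc g w (n + 1) x = encProc g w n (g (w n) x) := by
  induction n generalizing w with
  | zero => rfl
  | succ n ih => exact congrArg (g (w 0)) (ih (shift w))

theorem antitone_range_encProc (w : ℕ → U) : Antitone fun n => range (encProc g w n) := by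
  refine antitone_nat_of_succ_le fun n => ?_
  rintro _ ⟨x, rfl⟩
  exact ⟨g (w n) x, (encProc_succ_apply w n x).symm⟩

theorem range_encProc_succ (w : ℕ → U) (n : ℕ) :
    range (encProc g w (n + 1)) = g (w 0) '' range (encProc g (shift w) n) :=
  range_comp (g (w 0)) (encProc g (shift w) n)

theorem enc_subset_range_encProc (w : ℕ → U) (n : ℕ) : enc g w ⊆ range (encProc g w n) :=
  (iInter_subset _ n).trans (antitone_range_encProc w n.le_succ)

theorem shift_iterate_apply (w : ℕ → U) (k j : ℕ) : shift^[k] w j = w (j + k) := by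
  induction k generalizing w with
  | zero => rfl
  | succ _ ih => exact ih (shift w)

theorem surjective_leftOf (n : ℤ) : Surjective fun u : ℤ → U => leftOf u n := by
  intro w
  refine ⟨fun m => w (n - 1 - m).toNat, funext fun k => ?_⟩
  simp only [leftOf, sub_sub_cancel, Int.toNat_natCast]

/-- The continuation of a backward orbit `b`, where `b k` is the state at time `-k`, to all times:
from time `0` on, the state `b 0` is driven forward by the input `u`. -/
def extendBackward (g : U → X → X) (u : ℤ → U) (b : ℕ → X) : ℤ → X
  | Int.ofNat n => proc g u n 0 (b 0)
  | Int.negSucc k => b (k + 1)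

theorem isSolution_extendBackward {u : ℤ → U} {b : ℕ → X}
    (hb : ∀ k, g (leftOf u 0 k) (b (k + 1)) = b k) : IsSolution g u (extendBackward g u b) := by
  have leftOf_zero : ∀ k, leftOf u 0 k = u (Int.negSucc k) :=
    fun k => congrArg u (by omega : 0 - 1 - (k : ℤ) = Int.negSucc k)
  simp only [leftOf_zero] at hb
  intro n
  match n with
  | Int.ofNat n =>
    change g (u (0 + n)) (proc g u n 0 (b 0)) = g (u n) (proc g u n 0 (b 0))
    rw [zero_add]
  | Int.negSucc 0 => exact (hb 0).symm
  | Int.negSucc (k + 1) => exact (hb (k + 1)).symm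

end Orbits

theorem iInter_image_subset_image_iInter_of_isCompact {Y Z : Type*} [TopologicalSpace Y]
    [TopologicalSpace Z] [T1Space Z] {f : Y → Z} (hf : Continuous f) {K : ℕ → Set Y}
    (hK : Antitone K) (hcompact : IsCompact (K 0)) (hclosed : ∀ n, IsClosed (K n)) :
    ⋂ n, f '' K n ⊆ f '' ⋂ n, K n := by
  intro z hz
  have hfibre : IsClosed (f ⁻¹' {z}) := isClosed_singleton.preimage hf
  obtain ⟨y, hy⟩ : (⋂ n, K n ∩ f ⁻¹' {z}).Nonempty :=
    IsCompact.nonempty_iInter_of_sequence_nonempty_isCompact_isClosed _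
      (fun n => inter_subset_inter_left _ (hK n.le_succ)) (fun n => mem_iInter.1 hz n)
      (hcompact.inter_right hfibre) (fun n => (hclosed n).inter hfibre)
  rw [← iInter_inter] at hy
  exact ⟨y, hy.1, hy.2⟩

section ContinuousFibres

variable {g : U → X → X} [TopologicalSpace X]

theorem continuous_encProc (hg : ∀ v, Continuous (g v)) (w : ℕ → U) (n : ℕ) :
    Continuous (encProc g w n) := by
  induction n generalizing w with
  | zero => exact continuous_id
  | succ n ih => exact (hg (w 0)).comp (ih (shift w))

variable [CompactSpace X]

theorem isCompact_range_encProc (hg : ∀ v, Continuous (g v)) (w : ℕ → U) (n : ℕ) :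
    IsCompact (range (encProc g w n)) :=
  isCompact_range (continuous_encProc hg w n)

variable [T2Space X]

theorem enc_nonempty [Nonempty X] (hg : ∀ v, Continuous (g v)) (w : ℕ → U) :
    (enc g w).Nonempty :=
  IsCompact.nonempty_iInter_of_sequence_nonempty_isCompact_isClosed _
    (fun n => antitone_range_encProc w (n + 1).le_succ) (fun _ => range_nonempty _)
    (isCompact_range_encProc hg w 1) (fun n => (isCompact_range_encProc hg w (n + 1)).isClosed)

theorem enc_subset_image_enc_shift (hg : ∀ v, Continuous (g v)) (w : ℕ → U) :
    enc g w ⊆ g (w 0) '' enc g (shift w) := by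
  refine Subset.trans (subset_iInter fun n => ?_)
    (iInter_image_subset_image_iInter_of_isCompact (hg (w 0))
      (fun m n hmn => antitone_range_encProc (shift w) (Nat.succ_le_succ hmn))
      (isCompact_range_encProc hg (shift w) 1)
      (fun n => (isCompact_range_encProc hg (shift w) (n + 1)).isClosed))
  rw [← range_encProc_succ]
  exact enc_subset_range_encProc w (n + 2)

theorem exists_backward_orbit_of_mem_enc (hg : ∀ v, Continuous (g v)) {w : ℕ → U} {a : X}
    (ha : a ∈ enc g w) : ∃ b : ℕ → X, b 0 = a ∧ ∀ k, g (w k) (b (k + 1)) = b k := by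
  have exists_pred (k : ℕ) (x : X) (hx : x ∈ enc g (shift^[k] w)) :
      ∃ y ∈ enc g (shift^[k + 1] w), g (w k) y = x := by
    have := enc_subset_image_enc_shift hg (shift^[k] w) hx
    rwa [shift_iterate_apply, zero_add, ← iterate_succ_apply' shift] at this
  have : Nonempty X := ⟨a⟩
  choose! pred pred_mem g_pred using exists_pred
  let b : ℕ → X := Nat.rec a pred
  have b_mem (k : ℕ) : b k ∈ enc g (shift^[k] w) := by
    induction k with
    | zero => exact ha
    | succ k ih => exact pred_mem k (b k) ih
  exact ⟨b, rfl, fun k => g_pred k (b k) (b_mem k)⟩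

theorem exists_isSolution_of_mem_enc (hg : ∀ v, Continuous (g v)) {u : ℤ → U} {a : X}
    (ha : a ∈ enc g (leftOf u 0)) : ∃ x, IsSolution g u x ∧ x 0 = a := by
  obtain ⟨b, rfl, hb⟩ := exists_backward_orbit_of_mem_enc hg ha
  exact ⟨extendBackward g u b, isSolution_extendBackward hb, rfl⟩

theorem enc_leftOf_subsingleton (hg : ∀ v, Continuous (g v)) {u : ℤ → U}
    (hu : {x | IsSolution g u x}.Subsingleton) : (enc g (leftOf u 0)).Subsingleton := by
  intro a ha b hb
  obtain ⟨x, hx, rfl⟩ := exists_isSolution_of_mem_enc hg ha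
  obtain ⟨y, hy, rfl⟩ := exists_isSolution_of_mem_enc hg hb
  rw [hu hx hy]

theorem USP.enc_subsingleton (husp : USP g) (hg : ∀ v, Continuous (g v)) (w : ℕ → U) :
    (enc g w).Subsingleton := by
  obtain ⟨u, rfl⟩ := surjective_leftOf 0 w
  exact enc_leftOf_subsingleton hg fun x hx y hy => (husp u).unique hx hy

theorem exists_range_encProc_prod_subset (hg : ∀ v, Continuous (g v)) {w : ℕ → U}
    (hw : (enc g w).Subsingleton) {V : Set (X × X)} (hV : IsOpen V) (hdiag : diagonal X ⊆ V) :
    ∃ n, range (encProc g w n) ×ˢ range (encProc g w n) ⊆ V := by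
  let K (n : ℕ) : Set (X × X) := range (encProc g w (n + 1)) ×ˢ range (encProc g w (n + 1))
  have K_antitone : Antitone K := fun m n hmn =>
    have h := antitone_range_encProc w (Nat.succ_le_succ hmn)
    prod_mono h h
  have K_compact (n : ℕ) : IsCompact (K n) :=
    (isCompact_range_encProc hg w (n + 1)).prod (isCompact_range_encProc hg w (n + 1))
  have iInter_K_subset : ⋂ n, K n ⊆ V := fun p hp =>
    hdiag (hw (mem_iInter.2 fun n => (mem_iInter.1 hp n).1)
      (mem_iInter.2 fun n => (mem_iInter.1 hp n).2))
  obtain ⟨n, hn⟩ := exists_subset_nhds_of_isCompact K_antitone.directed_ge K_compact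
    fun p hp => hV.mem_nhds (iInter_K_subset hp)
  exact ⟨n + 1, hn⟩

end ContinuousFibres

section JointlyContinuous

variable {g : U → X → X} [TopologicalSpace U] [TopologicalSpace X]

theorem continuous_shift : Continuous (shift : (ℕ → U) → ℕ → U) :=
  continuous_pi fun k => continuous_apply (k + 1)

theorem continuous_uncurry_encProc (hg : Continuous fun p : U × X => g p.1 p.2) (n : ℕ) :
    Continuous fun p : (ℕ → U) × X => encProc g p.1 n p.2 := by
  induction n with
  | zero => exact continuous_snd
  | succ n ih =>
    have latest : Continuous fun p : (ℕ → U) × X => p.1 0 := by fun_prop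
    have earlier : Continuous fun p : (ℕ → U) × X => encProc g (shift p.1) n p.2 :=
      ih.comp (continuous_shift.prodMap continuous_id)
    exact hg.comp (latest.prodMk earlier)

variable [CompactSpace X]

theorem isOpen_setOf_range_encProc_prod_subset (hg : Continuous fun p : U × X => g p.1 p.2)
    (n : ℕ) {V : Set (X × X)} (hV : IsOpen V) :
    IsOpen {w : ℕ → U | range (encProc g w n) ×ˢ range (encProc g w n) ⊆ V} := by
  have hF : Continuous fun q : (ℕ → U) × X × X =>
      (encProc g q.1 n q.2.1, encProc g q.1 n q.2.2) :=
    ((continuous_uncurry_encProc hg n).comp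
      (continuous_fst.prodMk (continuous_fst.comp continuous_snd))).prodMk
    ((continuous_uncurry_encProc hg n).comp
      (continuous_fst.prodMk (continuous_snd.comp continuous_snd)))
  -- As `X × X` is compact, `{w | ∀ p, (w, p) ∈ O}` is open for every open `O`.
  convert isClosedMap_iff_kernImage.1 isClosedMap_fst_of_compactSpace (hV.preimage hF) using 1
  ext w
  simp only [prod_subset_iff, forall_mem_range, mem_ofPred_eq, kernImage, mem_preimage]
  exact ⟨fun h q hq => hq ▸ h q.2.1 q.2.2, fun h x y => h (x := (w, x, y)) rfl⟩

theorem exists_forall_range_encProc_prod_subset [CompactSpace U] [T2Space X]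
    (hg : Continuous fun p : U × X => g p.1 p.2) (henc : ∀ w, (enc g w).Subsingleton)
    {V : Set (X × X)} (hV : IsOpen V) (hdiag : diagonal X ⊆ V) :
    ∃ N, ∀ w : ℕ → U, range (encProc g w N) ×ˢ range (encProc g w N) ⊆ V := by
  let G (n : ℕ) : Set (ℕ → U) := {w | range (encProc g w n) ×ˢ range (encProc g w n) ⊆ V}
  have G_monotone : Monotone G := fun m n hmn w hw =>
    have h := antitone_range_encProc w hmn
    (prod_mono h h).trans hw
  have G_cover : univ ⊆ ⋃ n, G n := fun w _ =>
    mem_iUnion.2 (exists_range_encProc_prod_subset (fun v => hg.comp (Continuous.prodMk_right v))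
      (henc w) hV hdiag)
  obtain ⟨N, hN⟩ := isCompact_univ.elim_directed_cover G
    (fun n => isOpen_setOf_range_encProc_prod_subset hg n hV) G_cover G_monotone.directed_le
  exact ⟨N, fun w => hN (mem_univ w)⟩

end JointlyContinuous

theorem hausdorffDist_le_of_subset_of_dist_le {Y : Type*} [PseudoMetricSpace Y] {s t : Set Y}
    {r : ℝ} (hts : t ⊆ s) (ht : t.Nonempty) (hs : ∀ a ∈ s, ∀ b ∈ s, dist a b ≤ r) :
    hausdorffDist s t ≤ r := by
  obtain ⟨c, hc⟩ := ht
  have hr : 0 ≤ r := dist_nonneg.trans (hs c (hts hc) c (hts hc))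
  exact hausdorffDist_le_of_mem_dist hr (fun a ha => ⟨c, hc, hs a ha c (hts hc)⟩)
    (fun b hb => ⟨b, hts hb, hs b (hts hb) b (hts hb)⟩)

theorem stmt_7_general [MetricSpace X] [CompactSpace X] [TopologicalSpace U] [CompactSpace U]
    (g : U → X → X) (hg : Continuous fun p : U × X => g p.1 p.2) (husp : USP g) :
    ∀ ε > (0 : ℝ), ∃ N : ℕ, ∀ (w : ℕ → U) (n : ℕ), N ≤ n →
      hausdorffDist (range (encProc g w n)) (enc g w) < ε := by
  intro ε hε
  have hgv (v : U) : Continuous (g v) := hg.comp (Continuous.prodMk_right v)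
  have hopen : IsOpen {p : X × X | dist p.1 p.2 < ε / 2} :=
    isOpen_lt continuous_dist continuous_const
  have hdiag : diagonal X ⊆ {p : X × X | dist p.1 p.2 < ε / 2} := by
    rintro ⟨x, y⟩ (rfl : x = y)
    simpa using hε
  obtain ⟨N, hN⟩ :=
    exists_forall_range_encProc_prod_subset hg (husp.enc_subsingleton hgv) hopen hdiag
  refine ⟨N, fun w n hn => ?_⟩
  obtain ⟨x, -⟩ := (husp fun _ => w 0).exists
  have : Nonempty X := ⟨x 0⟩
  have hsmall : ∀ a ∈ range (encProc g w n), ∀ b ∈ range (encProc g w n), dist a b ≤ ε / 2 :=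
    fun a ha b hb =>
      have hab : dist a b < ε / 2 := hN w <|
        mk_mem_prod (antitone_range_encProc w hn ha) (antitone_range_encProc w hn hb)
      hab.le
  exact (hausdorffDist_le_of_subset_of_dist_le (enc_subset_range_encProc w n)
    (enc_nonempty hgv w) hsmall).trans_lt (half_lt_self hε)

/-- under the USP, the finite-time encodings `E_n(←u) = φ_ū(0, -n, X)`
converge to `E(←u)` uniformly on `←U` in the Hausdorff metric. -/
theorem stmt_7 [MetricSpace X] [CompactSpace X] [MetricSpace U] [CompactSpace U]
    (g : U → X → X) (hg : Continuous fun p : U × X => g p.1 p.2)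
    (husp : USP g) :
    ∀ ε > (0 : ℝ), ∃ N : ℕ, ∀ (w : ℕ → U) (n : ℕ), N ≤ n →
      Metric.hausdorffDist (Set.range (encProc g w n)) (enc g w) < ε :=
  stmt_7_general g hg husp
end
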